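/- Let μ_N denote the expected number of vertices of outdegree two in a lemniscate tree sampled uniformly at random from LT_N. Then μ_N = (1 − 2/π)·N + O(1); that is, there exists a constant C > 0 such that |μ_N − (1 − 2/π)·N| ≤ C for all N ≥ 1. -/

import Mathlib

/-!
A lemniscate tree on `N` vertices is a rooted nonplane binary tree whose vertices are
bijectively labeled `1,…,N` (here: `Fin N`, with vertex `0` playing the role of label 1)
such that labels strictly increase along every path directed away from the root.
Since children are unordered, such a tree is faithfully encoded by its parent function:
vertex `0` is the root (it has no parent), every other vertex has a parent with strictly
smaller label, and every vertex has at most two children.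
-/
def LemniscateTree (N : ℕ) : Type :=
  {f : Fin N → Option (Fin N) //
    (∀ i : Fin N, f i = none ↔ (i : ℕ) = 0) ∧
    (∀ i j : Fin N, f i = some j → (j : ℕ) < (i : ℕ)) ∧
    (∀ j : Fin N, (Finset.univ.filter fun i => f i = some j).card ≤ 2)}

instance (N : ℕ) : Fintype (LemniscateTree N) := by
  unfold LemniscateTree; infer_instance

/-- The number of vertices of outdegree two (i.e. with exactly two children). -/
def outdegTwoCount {N : ℕ} (T : LemniscateTree N) : ℕ :=
  (Finset.univ.filter fun j : Fin N =>
    (Finset.univ.filter fun i => T.1 i = some j).card = 2).card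

/-- `μ_N`: the mean number of outdegree-two vertices of a uniformly random
lemniscate tree on `N` vertices. -/
noncomputable def lemMean (N : ℕ) : ℝ :=
  (∑ T : LemniscateTree N, (outdegTwoCount T : ℝ)) / (Fintype.card (LemniscateTree N))

/-!
Removing the vertex with the largest label, necessarily a leaf, is a bijection from the trees on
`N + 1` vertices to the pairs of a tree on `N` vertices and a vertex with at most one child.
Counting these pairs turns the mean into `N - a (N + 1) / a N`, where `a N` is the number of trees.
Weighting a vertex with `d` children by the `d`-th derivative of `φ = (1 + X ^ 2) / 2`, the same
bijection shows that the weighted sum over all trees obeys the recursion of the derivatives of a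
solution of `y' = φ(y)`. All weights are `1` at `X = 1`, so `a N` is the `N`-th derivative at `0` of
the solution with `y 0 = 1`, namely `y z = cot (π / 4 - z / 2) = sec z + tan z`.

The singularity of `y` nearest to `0` is a simple pole at `π / 2`, so `(π / 2 - z) * y z` is
holomorphic on a disc of radius `3`, and Cauchy's estimate for its derivatives at `0` gives
`π / 2 * a (N + 1) - (N + 1) * a N = O((N + 1)! / 3 ^ N)`. Since fewer than half of the vertices
have two children, `a N ≥ N! / 2 ^ N`, and the error is `O(a N)`.
-/

open Finset Polynomial
open scoped Topology

section Outdegree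

variable {α : Type*} [Fintype α] [DecidableEq α]

/-- The number of children of the vertex `j` in the forest with parent function `f`. -/
def outdeg (f : α → Option α) (j : α) : ℕ :=
  #{i | f i = some j}

lemma sum_outdeg (f : α → Option α) : ∑ j, outdeg f j = #{i | f i ≠ none} := by
  simp only [outdeg, card_filter]
  rw [sum_comm]
  refine sum_congr rfl fun i _ => ?_
  cases f i <;> simp

end Outdegree

/-- The property of parent functions defining `LemniscateTree`. -/
def IsLemniscate {N : ℕ} (f : Fin N → Option (Fin N)) : Prop :=
  (∀ i, f i = none ↔ (i : ℕ) = 0) ∧ (∀ i j, f i = some j → (j : ℕ) < (i : ℕ)) ∧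
    ∀ j, outdeg f j ≤ 2

section AttachLeaf

variable {N : ℕ}

/-- The parent function of the forest obtained from `f` by attaching a new vertex, with the largest
label, as a child of `j`. -/
def attachLeaf (f : Fin N → Option (Fin N)) (j : Fin N) : Fin (N + 1) → Option (Fin (N + 1)) :=
  Fin.snoc (α := fun _ => Option (Fin (N + 1))) (fun i => (f i).map Fin.castSucc) (some j.castSucc)

@[simp]
lemma attachLeaf_castSucc (f : Fin N → Option (Fin N)) (j i : Fin N) :
    attachLeaf f j i.castSucc = (f i).map Fin.castSucc := by
  simp [attachLeaf]

@[simp]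
lemma attachLeaf_last (f : Fin N → Option (Fin N)) (j : Fin N) :
    attachLeaf f j (Fin.last N) = some j.castSucc := by
  simp [attachLeaf]

lemma outdeg_attachLeaf_castSucc (f : Fin N → Option (Fin N)) (j k : Fin N) :
    outdeg (attachLeaf f j) k.castSucc = outdeg f k + if j = k then 1 else 0 := by
  simp only [outdeg, card_filter, Fin.sum_univ_castSucc, attachLeaf_castSucc, attachLeaf_last]
  simp

lemma outdeg_attachLeaf_last (f : Fin N → Option (Fin N)) (j : Fin N) :
    outdeg (attachLeaf f j) (Fin.last N) = 0 := by
  simp [outdeg, Fin.forall_fin_succ', Fin.castSucc_ne_last]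

lemma isLemniscate_attachLeaf_iff {f : Fin N → Option (Fin N)} {j : Fin N} :
    IsLemniscate (attachLeaf f j) ↔ IsLemniscate f ∧ outdeg f j ≤ 1 := by
  have outdeg_le : (∀ k, outdeg f k + (if j = k then 1 else 0) ≤ 2) ↔
      (∀ k, outdeg f k ≤ 2) ∧ outdeg f j ≤ 1 := by
    grind
  have : NeZero N := j.neZero
  simp [IsLemniscate, Fin.forall_fin_succ', outdeg_attachLeaf_castSucc, outdeg_attachLeaf_last,
    outdeg_le, NeZero.ne N, and_assoc, Fin.castSucc_ne_last]

lemma attachLeaf_inj {f g : Fin N → Option (Fin N)} {j k : Fin N} :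
    attachLeaf f j = attachLeaf g k ↔ f = g ∧ j = k := by
  simp [funext_iff, Fin.forall_fin_succ', (Option.map_injective (Fin.castSucc_injective N)).eq_iff]

lemma IsLemniscate.exists_eq_attachLeaf [NeZero N] {g : Fin (N + 1) → Option (Fin (N + 1))}
    (hg : IsLemniscate g) : ∃ f j, g = attachLeaf f j := by
  obtain ⟨none_iff, parent_lt, -⟩ := hg
  have parent_ne_last : ∀ i, g i ≠ some (Fin.last N) := fun i h =>
    (parent_lt i _ h).not_ge (Fin.le_last i)
  have exists_castSucc : ∀ i, ∃ o : Option (Fin N), g i = o.map Fin.castSucc := by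
    intro i
    cases h : g i with
    | none => exact ⟨none, rfl⟩
    | some k =>
      obtain ⟨k, rfl⟩ := Fin.exists_castSucc_eq.2 fun hk => parent_ne_last i (hk ▸ h)
      exact ⟨some k, rfl⟩
  choose f hf using exists_castSucc
  obtain ⟨j, hj⟩ : ∃ j, f (Fin.last N) = some j := by
    rw [← Option.ne_none_iff_exists']
    intro h
    have : g (Fin.last N) = none := by simp [hf, h]
    exact NeZero.ne N (by simpa using (none_iff _).1 this)
  refine ⟨fun i => f i.castSucc, j, ?_⟩
  simp [funext_iff, Fin.forall_fin_succ', hf, hj]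

end AttachLeaf

namespace LemniscateTree

variable {N : ℕ}

/-- The parent function of a tree; only the root `0` is mapped to `none`. -/
def parent (T : LemniscateTree N) : Fin N → Option (Fin N) :=
  T.1

/-- The tree with a given parent function. -/
def ofParent (f : Fin N → Option (Fin N)) (hf : IsLemniscate f) : LemniscateTree N :=
  Subtype.mk f hf

@[simp]
lemma parent_ofParent {f : Fin N → Option (Fin N)} (hf : IsLemniscate f) :
    (ofParent f hf).parent = f :=
  rfl

lemma parent_injective : Function.Injective (parent : LemniscateTree N → _) :=
  Subtype.val_injective

lemma isLemniscate_parent (T : LemniscateTree N) : IsLemniscate T.parent :=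
  T.2

/-- Growing a tree by a leaf below a vertex with at most one child: every tree with at least two
vertices arises exactly once in this way. -/
noncomputable def growEquiv [NeZero N] :
    (Σ T : LemniscateTree N, {j // outdeg T.parent j ≤ 1}) ≃ LemniscateTree (N + 1) :=
  Equiv.ofBijective
    (fun p => ofParent (attachLeaf p.1.parent p.2)
      (isLemniscate_attachLeaf_iff.2 ⟨p.1.isLemniscate_parent, p.2.2⟩)) <| by
    constructor
    · rintro ⟨S, j, hj⟩ ⟨T, k, hk⟩ h
      obtain ⟨parent_eq, rfl⟩ := attachLeaf_inj.1 (congrArg parent h)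
      obtain rfl := parent_injective parent_eq
      rfl
    · intro T
      obtain ⟨f, j, parent_eq⟩ := T.isLemniscate_parent.exists_eq_attachLeaf
      obtain ⟨hf, hj⟩ := isLemniscate_attachLeaf_iff.1 (parent_eq ▸ T.isLemniscate_parent)
      exact ⟨⟨ofParent f hf, j, hj⟩, parent_injective parent_eq.symm⟩

lemma parent_growEquiv [NeZero N] (p : Σ T : LemniscateTree N, {j // outdeg T.parent j ≤ 1}) :
    (growEquiv p).parent = attachLeaf p.1.parent p.2 :=
  rfl

instance : Unique (LemniscateTree 1) where
  default := ofParent (fun _ => none) ⟨by simp, by simp, by simp [outdeg]⟩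
  uniq T := parent_injective <| funext fun i => (T.isLemniscate_parent.1 i).2 (Fin.val_eq_zero i)

lemma outdegTwoCount_eq_card (T : LemniscateTree N) :
    outdegTwoCount T = #{j | outdeg T.parent j = 2} :=
  rfl

lemma outdegTwoCount_add_card_outdeg_le_one (T : LemniscateTree N) :
    outdegTwoCount T + #{j | outdeg T.parent j ≤ 1} = N := by
  have outdeg_le_one_iff : ∀ j, outdeg T.parent j ≤ 1 ↔ ¬ outdeg T.parent j = 2 := fun j => by
    have := T.isLemniscate_parent.2.2 j
    omega
  simp only [outdegTwoCount_eq_card, outdeg_le_one_iff, card_filter_add_card_filter_not, card_univ,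
    Fintype.card_fin]

lemma sum_outdeg_add_one [NeZero N] (T : LemniscateTree N) :
    ∑ j, outdeg T.parent j + 1 = N := by
  have parent_eq_none_iff : ∀ i, T.parent i = none ↔ i = 0 := fun i => by
    rw [T.isLemniscate_parent.1, Fin.val_eq_zero_iff]
  simp only [sum_outdeg, ne_eq, parent_eq_none_iff, filter_ne', card_erase_add_one (mem_univ _),
    card_univ, Fintype.card_fin]

lemma two_mul_outdegTwoCount_lt [NeZero N] (T : LemniscateTree N) : 2 * outdegTwoCount T < N := by
  have : 2 * outdegTwoCount T ≤ ∑ j, outdeg T.parent j := by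
    rw [outdegTwoCount_eq_card, card_filter, mul_sum]
    refine sum_le_sum fun j _ => ?_
    split_ifs <;> omega
  have := T.sum_outdeg_add_one
  omega

lemma sum_outdegTwoCount_add_card_succ [NeZero N] :
    ∑ T : LemniscateTree N, outdegTwoCount T + Fintype.card (LemniscateTree (N + 1)) =
      N * Fintype.card (LemniscateTree N) := by
  rw [← Fintype.card_congr growEquiv, Fintype.card_sigma, ← sum_add_distrib]
  simp only [Fintype.card_subtype, outdegTwoCount_add_card_outdeg_le_one, sum_const, card_univ,
    smul_eq_mul, mul_comm]

lemma succ_mul_card_le [NeZero N] :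
    (N + 1) * Fintype.card (LemniscateTree N) ≤ 2 * Fintype.card (LemniscateTree (N + 1)) := by
  have : ∑ T : LemniscateTree N, (2 * outdegTwoCount T + 1) ≤ ∑ _T : LemniscateTree N, N :=
    sum_le_sum fun T _ => T.two_mul_outdegTwoCount_lt
  simp only [sum_add_distrib, ← mul_sum, sum_const, card_univ, smul_eq_mul, mul_one] at this
  linarith [sum_outdegTwoCount_add_card_succ (N := N)]

lemma factorial_le_two_pow_mul_card [NeZero N] :
    N.factorial ≤ 2 ^ N * Fintype.card (LemniscateTree N) := by
  induction N, NeZero.one_le (n := N) using Nat.le_induction with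
  | base => simp
  | succ N hN ih =>
    have : NeZero N := ⟨by omega⟩
    calc (N + 1).factorial = (N + 1) * N.factorial := N.factorial_succ
      _ ≤ (N + 1) * (2 ^ N * Fintype.card (LemniscateTree N)) := by gcongr
      _ = 2 ^ N * ((N + 1) * Fintype.card (LemniscateTree N)) := by ring
      _ ≤ 2 ^ N * (2 * Fintype.card (LemniscateTree (N + 1))) :=
        Nat.mul_le_mul_left _ succ_mul_card_le
      _ = 2 ^ (N + 1) * Fintype.card (LemniscateTree (N + 1)) := by ring

lemma card_pos [NeZero N] : 0 < Fintype.card (LemniscateTree N) :=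
  pos_of_mul_pos_right (N.factorial_pos.trans_le factorial_le_two_pow_mul_card) (by positivity)

lemma lemMean_eq [NeZero N] : lemMean N =
    N - (Fintype.card (LemniscateTree (N + 1)) : ℝ) / Fintype.card (LemniscateTree N) := by
  have card_ne_zero : (Fintype.card (LemniscateTree N) : ℝ) ≠ 0 := mod_cast card_pos.ne'
  have : (∑ T : LemniscateTree N, (outdegTwoCount T : ℝ)) + Fintype.card (LemniscateTree (N + 1)) =
      N * Fintype.card (LemniscateTree N) := mod_cast sum_outdegTwoCount_add_card_succ
  rw [lemMean, eq_sub_iff_add_eq, ← add_div, this, mul_div_cancel_right₀ _ card_ne_zero]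

-- The outdegree 3 is forbidden; since its weight vanishes, the sum on the right may run over all
-- vertices.
lemma sum_prod_outdeg_succ [NeZero N] {R : Type*} [CommSemiring R] {w : ℕ → R}
    (hw : w 3 = 0) :
    ∑ T : LemniscateTree (N + 1), ∏ j, w (outdeg T.parent j) =
      ∑ T : LemniscateTree N, ∑ j,
        w 0 * ((∏ i ∈ univ.erase j, w (outdeg T.parent i)) * w (outdeg T.parent j + 1)) := by
  have prod_attachLeaf (f : Fin N → Option (Fin N)) (j : Fin N) :
      ∏ i, w (outdeg (attachLeaf f j) i) =
        w 0 * ((∏ i ∈ univ.erase j, w (outdeg f i)) * w (outdeg f j + 1)) := by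
    have : ∏ i ∈ univ.erase j, w (outdeg f i + if j = i then 1 else 0) =
        ∏ i ∈ univ.erase j, w (outdeg f i) :=
      prod_congr rfl fun i hi => by rw [if_neg (ne_of_mem_erase hi).symm, add_zero]
    rw [Fin.prod_univ_castSucc, outdeg_attachLeaf_last]
    simp only [outdeg_attachLeaf_castSucc]
    rw [← prod_erase_mul _ _ (mem_univ j), this, if_pos rfl, mul_comm]
  rw [← growEquiv.sum_comp, Fintype.sum_sigma]
  simp only [parent_growEquiv, prod_attachLeaf]
  refine sum_congr rfl fun T _ => ?_
  rw [← sum_subtype {j | outdeg T.parent j ≤ 1} (by simp) fun j =>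
    w 0 * ((∏ i ∈ univ.erase j, w (outdeg T.parent i)) * w (outdeg T.parent j + 1))]
  refine sum_subset (subset_univ _) fun j _ hj => ?_
  have : outdeg T.parent j + 1 = 3 := by
    have := T.isLemniscate_parent.2.2 j
    grind
  rw [this, hw, mul_zero, mul_zero]

end LemniscateTree

/-- The derivation `p ↦ φ * p'`: along a solution of `y' = φ(y)` it computes the derivative of
`p(y)`. -/
noncomputable def flowDerivative {R : Type*} [CommSemiring R] (φ p : R[X]) : R[X] :=
  φ * derivative p

lemma LemniscateTree.sum_prod_iterate_derivative {R : Type*} [CommSemiring R] {φ : R[X]}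
    (hφ : derivative^[3] φ = 0) {N : ℕ} [NeZero N] :
    ∑ T : LemniscateTree N, ∏ j, derivative^[outdeg T.parent j] φ = (flowDerivative φ)^[N] X := by
  induction N, NeZero.one_le (n := N) using Nat.le_induction with
  | base =>
    have outdeg_root : outdeg (default : LemniscateTree 1).parent 0 = 0 := by
      simpa using (default : LemniscateTree 1).sum_outdeg_add_one
    simp [flowDerivative, outdeg_root]
  | succ N hN ih =>
    have : NeZero N := ⟨by omega⟩
    rw [Function.iterate_succ_apply', ← ih,
      sum_prod_outdeg_succ (w := fun d => derivative^[d] φ) hφ]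
    simp only [flowDerivative, derivative_sum, derivative_prod_finset, mul_sum,
      Function.iterate_zero_apply, Function.iterate_succ_apply']

lemma iteratedDeriv_eventuallyEq_eval_iterate_flowDerivative {𝕜 : Type*}
    [NontriviallyNormedField 𝕜] {φ : 𝕜[X]} {y : 𝕜 → 𝕜} {z : 𝕜}
    (hy : ∀ᶠ w in 𝓝 z, HasDerivAt y (φ.eval (y w)) w) (n : ℕ) :
    iteratedDeriv n y =ᶠ[𝓝 z] fun w => ((flowDerivative φ)^[n] X).eval (y w) := by
  induction n with
  | zero => simp
  | succ n ih =>
    filter_upwards [ih.deriv, hy] with w deriv_eq hasDerivAt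
    rw [iteratedDeriv_succ, deriv_eq, Function.iterate_succ_apply', flowDerivative, eval_mul,
      mul_comm]
    exact ((((flowDerivative φ)^[n] X).hasDerivAt (y w)).comp w hasDerivAt).deriv

lemma iteratedDeriv_succ_const_sub_id_mul {𝕜 : Type*} [NontriviallyNormedField 𝕜] {y : 𝕜 → 𝕜}
    {n : ℕ} {z : 𝕜} (c : 𝕜) (hy : ContDiffAt 𝕜 (n + 1 : ℕ) y z) :
    iteratedDeriv (n + 1) (fun w => (c - w) * y w) z =
      (c - z) * iteratedDeriv (n + 1) y z - (n + 1) * iteratedDeriv n y z := by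
  have contDiffAt_sub : ContDiffAt 𝕜 (n + 1 : ℕ) (fun w => c - w) z := by fun_prop
  have iteratedDeriv_sub : ∀ i : ℕ, iteratedDeriv (i + 2) (fun w => c - w) z = 0 := by
    simp [iteratedDeriv_succ', iteratedDeriv_const]
  rw [iteratedDeriv_fun_mul contDiffAt_sub hy, sum_range_succ', sum_range_succ']
  simp only [iteratedDeriv_sub, iteratedDeriv_one, iteratedDeriv_zero, deriv_const_sub_id',
    mul_zero, zero_mul, sum_const_zero, zero_add, Nat.choose_one_right, Nat.choose_zero_right,
    Nat.cast_add, Nat.cast_one, add_tsub_cancel_right, tsub_zero]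
  ring

lemma exists_norm_iteratedDeriv_le {F : Type*} [NormedAddCommGroup F] [NormedSpace ℂ F]
    [CompleteSpace F] {f : ℂ → F} {c : ℂ} {r : ℝ} (hr : 0 < r)
    (hf : DifferentiableOn ℂ f (Metric.closedBall c r)) :
    ∃ C, 0 < C ∧ ∀ n : ℕ, ‖iteratedDeriv n f c‖ ≤ n.factorial * C / r ^ n := by
  obtain ⟨C, hC⟩ := (isCompact_sphere c r).exists_bound_of_continuousOn
    (hf.continuousOn.mono Metric.sphere_subset_closedBall)
  exact ⟨max C 1, by positivity, fun n =>
    Complex.norm_iteratedDeriv_le_of_forall_mem_sphere_norm_le n hr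
      (hf.mono Metric.closure_ball_subset_closedBall).diffContOnCl
      fun z hz => (hC z hz).trans (le_max_left _ _)⟩

lemma hasDerivAt_cot {z : ℂ} (hz : Complex.sin z ≠ 0) :
    HasDerivAt Complex.cot (-(1 + Complex.cot z ^ 2)) z := by
  have hasDerivAt_div : HasDerivAt (fun z => Complex.cos z / Complex.sin z) _ z :=
    (Complex.hasDerivAt_cos z).div (Complex.hasDerivAt_sin z) hz
  refine hasDerivAt_div.congr_deriv ?_
  rw [Complex.cot]
  field_simp
  ring

/-- The function `z * cot z` with its removable singularity at `0` filled in: the denominator is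
`sin z / z` for `z ≠ 0` and `1` for `z = 0`. -/
noncomputable def idMulCot (z : ℂ) : ℂ :=
  Complex.cos z / dslope Complex.sin 0 z

lemma idMulCot_of_ne_zero {z : ℂ} (hz : z ≠ 0) : idMulCot z = z * Complex.cot z := by
  rw [idMulCot, dslope_of_ne _ hz, slope_def_field, Complex.cot, Complex.sin_zero, sub_zero,
    sub_zero, div_div_eq_mul_div, mul_comm, mul_div_assoc]

lemma dslope_sin_zero_ne_zero {z : ℂ} (hz : ‖z‖ < Real.pi) : dslope Complex.sin 0 z ≠ 0 := by
  rcases eq_or_ne z 0 with rfl | hz₀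
  · simp
  have sin_ne_zero : Complex.sin z ≠ 0 := by
    intro sin_eq_zero
    obtain ⟨k, rfl⟩ := Complex.sin_eq_zero_iff.1 sin_eq_zero
    have one_le_abs : (1 : ℝ) ≤ |(k : ℝ)| :=
      mod_cast Int.one_le_abs fun hk => hz₀ (by simp [hk])
    rw [norm_mul, Complex.norm_intCast, Complex.norm_real,
      Real.norm_of_nonneg Real.pi_pos.le] at hz
    exact (le_mul_of_one_le_left Real.pi_pos.le one_le_abs).not_gt hz
  simpa [dslope_of_ne _ hz₀, slope_def_field] using ⟨sin_ne_zero, hz₀⟩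

lemma differentiableOn_idMulCot : DifferentiableOn ℂ idMulCot (Metric.ball 0 Real.pi) := by
  have differentiableOn_dslope : DifferentiableOn ℂ (dslope Complex.sin 0) Set.univ :=
    (Complex.differentiableOn_dslope Filter.univ_mem).2 Complex.differentiable_sin.differentiableOn
  exact Complex.differentiable_cos.differentiableOn.div
    (differentiableOn_dslope.mono (Set.subset_univ _))
    fun z hz => dslope_sin_zero_ne_zero (by simpa using hz)

/-- The function `sec z + tan z`, the solution of `y' = (1 + y ^ 2) / 2` with `y 0 = 1`. The
cotangent form exhibits its simple pole at `π / 2`. -/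
noncomputable def secAddTan (z : ℂ) : ℂ :=
  Complex.cot (Real.pi / 4 - z / 2)

lemma sin_pi_div_four_ne_zero : Complex.sin (Real.pi / 4) ≠ 0 := by
  have : Real.sin (Real.pi / 4) ≠ 0 := by simp [Real.sin_pi_div_four]
  exact_mod_cast this

lemma secAddTan_zero : secAddTan 0 = 1 := by
  have : Complex.cos (Real.pi / 4) = Complex.sin (Real.pi / 4) :=
    mod_cast Real.cos_pi_div_four.trans Real.sin_pi_div_four.symm
  rw [secAddTan, zero_div, sub_zero, Complex.cot, this, div_self sin_pi_div_four_ne_zero]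

lemma eventually_hasDerivAt_secAddTan :
    ∀ᶠ z in 𝓝 0, HasDerivAt secAddTan ((1 + secAddTan z ^ 2) / 2) z := by
  have sin_ne_zero : ∀ᶠ z : ℂ in 𝓝 0, Complex.sin (Real.pi / 4 - z / 2) ≠ 0 := by
    refine ContinuousAt.eventually_ne (by fun_prop) ?_
    simpa using sin_pi_div_four_ne_zero
  filter_upwards [sin_ne_zero] with z hz
  have hasDerivAt_angle : HasDerivAt (fun w : ℂ => Real.pi / 4 - w / 2) (-(1 / 2)) z :=
    ((hasDerivAt_id z).div_const 2).const_sub _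
  refine ((hasDerivAt_cot hz).comp z hasDerivAt_angle).congr_deriv ?_
  rw [secAddTan]
  ring

lemma analyticAt_secAddTan : AnalyticAt ℂ secAddTan 0 :=
  Complex.analyticAt_iff_eventually_differentiableAt.2 <|
    eventually_hasDerivAt_secAddTan.mono fun _ h => h.differentiableAt

lemma pi_div_two_sub_mul_secAddTan_eventuallyEq :
    (fun z => (Real.pi / 2 - z) * secAddTan z) =ᶠ[𝓝 0]
      fun z => 2 * idMulCot (Real.pi / 4 - z / 2) := by
  have angle_ne_zero : ∀ᶠ z : ℂ in 𝓝 0, Real.pi / 4 - z / 2 ≠ 0 :=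
    ContinuousAt.eventually_ne (by fun_prop) (by simp [Real.pi_ne_zero])
  filter_upwards [angle_ne_zero] with z hz
  rw [idMulCot_of_ne_zero hz, secAddTan]
  ring

lemma differentiableOn_two_mul_idMulCot_pi_div_four_sub :
    DifferentiableOn ℂ (fun z : ℂ => 2 * idMulCot (Real.pi / 4 - z / 2))
      (Metric.closedBall 0 3) := by
  refine (differentiableOn_idMulCot.comp (by fun_prop) fun z hz => ?_).const_mul 2
  have norm_le : ‖z‖ ≤ 3 := by simpa using hz
  rw [mem_ball_zero_iff]
  calc ‖(Real.pi / 4 - z / 2 : ℂ)‖ ≤ ‖(Real.pi / 4 : ℂ)‖ + ‖z / 2‖ := norm_sub_le _ _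
    _ = Real.pi / 4 + ‖z‖ / 2 := by simp [abs_of_pos Real.pi_pos]
    _ < Real.pi := by linarith [Real.pi_gt_three]

lemma exists_norm_pi_div_two_mul_iteratedDeriv_secAddTan_sub_le :
    ∃ C, 0 < C ∧ ∀ n : ℕ, ‖Real.pi / 2 * iteratedDeriv (n + 1) secAddTan 0 -
      (n + 1) * iteratedDeriv n secAddTan 0‖ ≤ (n + 1).factorial * C / 3 ^ (n + 1) := by
  obtain ⟨C, hC, norm_le⟩ :=
    exists_norm_iteratedDeriv_le three_pos differentiableOn_two_mul_idMulCot_pi_div_four_sub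
  refine ⟨C, hC, fun n => ?_⟩
  have := norm_le (n + 1)
  rwa [← pi_div_two_sub_mul_secAddTan_eventuallyEq.iteratedDeriv_eq,
    iteratedDeriv_succ_const_sub_id_mul _ analyticAt_secAddTan.contDiffAt, sub_zero] at this

lemma succ_mul_two_pow_le_three_pow (n : ℕ) : (n + 1) * 2 ^ n ≤ 3 ^ (n + 1) := by
  induction n with
  | zero => simp
  | succ n ih =>
    calc (n + 1 + 1) * 2 ^ (n + 1) = 2 * ((n + 1) * 2 ^ n) + 2 ^ (n + 1) := by ring
      _ ≤ 2 * 3 ^ (n + 1) + 3 ^ (n + 1) := by gcongr; norm_num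
      _ = 3 ^ (n + 1 + 1) := by ring

namespace LemniscateTree

lemma card_eq_iteratedDeriv_secAddTan {N : ℕ} [NeZero N] :
    (Fintype.card (LemniscateTree N) : ℂ) = iteratedDeriv N secAddTan 0 := by
  let φ : ℂ[X] := C (1 / 2) * (1 + X ^ 2)
  have iterate_derivative_eval_one : ∀ d ≤ 2, (derivative^[d] φ).eval 1 = 1 := by
    intro d hd
    interval_cases d <;> norm_num [φ]
  have iterate_derivative_three : derivative^[3] φ = 0 := by
    simp [φ]
  have hasDerivAt : ∀ᶠ z in 𝓝 0, HasDerivAt secAddTan (φ.eval (secAddTan z)) z := by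
    filter_upwards [eventually_hasDerivAt_secAddTan] with z hz
    refine hz.congr_deriv ?_
    simp only [φ, eval_mul, eval_C, eval_add, eval_one, eval_pow, eval_X]
    ring
  have prod_eq_one (T : LemniscateTree N) :
      ∏ j, (derivative^[outdeg T.parent j] φ).eval 1 = 1 :=
    prod_eq_one fun j _ => iterate_derivative_eval_one _ (T.isLemniscate_parent.2.2 j)
  rw [(iteratedDeriv_eventuallyEq_eval_iterate_flowDerivative hasDerivAt N).eq_of_nhds,
    secAddTan_zero, ← sum_prod_iterate_derivative iterate_derivative_three]
  simp [eval_finsetSum, eval_prod, prod_eq_one]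

lemma factorial_succ_le_three_pow_mul_card {N : ℕ} [NeZero N] :
    (N + 1).factorial ≤ 3 ^ (N + 1) * Fintype.card (LemniscateTree N) := by
  calc (N + 1).factorial = (N + 1) * N.factorial := N.factorial_succ
    _ ≤ (N + 1) * (2 ^ N * Fintype.card (LemniscateTree N)) := by
      gcongr
      exact factorial_le_two_pow_mul_card
    _ = (N + 1) * 2 ^ N * Fintype.card (LemniscateTree N) := by ring
    _ ≤ 3 ^ (N + 1) * Fintype.card (LemniscateTree N) := by
      gcongr
      exact succ_mul_two_pow_le_three_pow N

lemma exists_abs_pi_div_two_mul_card_succ_sub_le :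
    ∃ C : ℝ, 0 < C ∧ ∀ (N : ℕ) [NeZero N],
      |Real.pi / 2 * Fintype.card (LemniscateTree (N + 1)) -
        (N + 1) * Fintype.card (LemniscateTree N)| ≤ C * Fintype.card (LemniscateTree N) := by
  obtain ⟨C, hC, norm_le⟩ := exists_norm_pi_div_two_mul_iteratedDeriv_secAddTan_sub_le
  refine ⟨C, hC, fun N _ => ?_⟩
  have cauchy_bound : |Real.pi / 2 * Fintype.card (LemniscateTree (N + 1)) -
      (N + 1) * Fintype.card (LemniscateTree N)| ≤ (N + 1).factorial * C / 3 ^ (N + 1) := by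
    have := norm_le N
    rw [← card_eq_iteratedDeriv_secAddTan, ← card_eq_iteratedDeriv_secAddTan] at this
    exact_mod_cast this
  refine cauchy_bound.trans ?_
  rw [div_le_iff₀ (by positivity)]
  calc ((N + 1).factorial : ℝ) * C ≤ 3 ^ (N + 1) * Fintype.card (LemniscateTree N) * C := by
        gcongr
        exact_mod_cast factorial_succ_le_three_pow_mul_card
    _ = C * Fintype.card (LemniscateTree N) * 3 ^ (N + 1) := by ring

lemma exists_abs_card_succ_div_card_sub_le :
    ∃ C : ℝ, 0 < C ∧ ∀ (N : ℕ) [NeZero N],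
      |(Fintype.card (LemniscateTree (N + 1)) : ℝ) / Fintype.card (LemniscateTree N) -
        2 / Real.pi * (N + 1)| ≤ C := by
  obtain ⟨C, hC, abs_le⟩ := exists_abs_pi_div_two_mul_card_succ_sub_le
  refine ⟨2 / Real.pi * C, by positivity, fun N _ => ?_⟩
  have card_pos : (0 : ℝ) < Fintype.card (LemniscateTree N) := mod_cast card_pos
  specialize abs_le N
  set a := (Fintype.card (LemniscateTree N) : ℝ)
  set b := (Fintype.card (LemniscateTree (N + 1)) : ℝ)
  calc |b / a - 2 / Real.pi * (N + 1)|
      = |2 / Real.pi * ((Real.pi / 2 * b - (N + 1) * a) / a)| := by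
        congr 1
        field_simp
    _ = 2 / Real.pi * (|Real.pi / 2 * b - (N + 1) * a| / a) := by
        rw [abs_mul, abs_of_pos (by positivity : 0 < 2 / Real.pi), abs_div, abs_of_pos card_pos]
    _ ≤ 2 / Real.pi * C := by
        gcongr
        exact (div_le_iff₀ card_pos).2 abs_le

end LemniscateTree

/-- `μ_N = (1 − 2/π)·N + O(1)`. -/
theorem mean_outdegTwo_asymptotic :
    ∃ C : ℝ, 0 < C ∧ ∀ N : ℕ, 1 ≤ N →
      |lemMean N - (1 - 2 / Real.pi) * N| ≤ C := by
  obtain ⟨C, hC, abs_ratio_le⟩ := LemniscateTree.exists_abs_card_succ_div_card_sub_le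
  refine ⟨C + 2 / Real.pi, by positivity, fun N hN => ?_⟩
  have : NeZero N := ⟨by omega⟩
  rw [LemniscateTree.lemMean_eq]
  specialize abs_ratio_le N
  set ratio := (Fintype.card (LemniscateTree (N + 1)) : ℝ) / Fintype.card (LemniscateTree N)
  calc |N - ratio - (1 - 2 / Real.pi) * N|
      = |(ratio - 2 / Real.pi * (N + 1)) + 2 / Real.pi| := by
        rw [← abs_neg]
        congr 1
        ring
    _ ≤ |ratio - 2 / Real.pi * (N + 1)| + |2 / Real.pi| := abs_add_le _ _
    _ ≤ C + 2 / Real.pi := by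
        rw [abs_of_pos (by positivity : 0 < 2 / Real.pi)]
        gcongr
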